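/- Let d be a positive integer, Q ∈ ℝ^{d×d}, S : ℝ^d → ℝ^{d×d} Lipschitz continuous with constant L_S, and h > 0. Let y, w, u : [0, h] → ℝ^d be continuous with y(t) = y(0) + ∫₀ᵗ S(y(r)) Q y(r) dr and u(t) = y(0) + ∫₀ᵗ S(w(r)) Q w(r) dr for all t ∈ [0, h]. Set C_y = sup_{t∈[0,h]} ‖y(t)‖ and M = sup_{t∈[0,h]} ‖S(w(t))‖₂, and suppose sup_{t∈[0,h]} ‖w(t) − y(t)‖ ≤ D. Then sup_{t∈[0,h]} ‖u(t) − y(t)‖ ≤ h ‖Q‖₂ (L_S C_y + M) D. -/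

import Mathlib

/-!
The difference of the two integrands splits as
`S(w) Q w - S(y) Q y = S(w) Q (w - y) + (S(w) - S(y)) Q y`,
whose norm is at most `M ‖Q‖₂ D + L_S D ‖Q‖₂ C_y`; integrating over an interval of length at most
`h` gives the bound. Continuity of `S`, `y`, `w` on the compact interval makes both integrands
integrable and both suprema genuine upper bounds. The argument is carried out for continuous linear
maps; matrices are transported through `matCLM`.
-/

open scoped RealInnerProductSpace
open Set MeasureTheory intervalIntegral Filter

/-- Action of a matrix on a vector of the Euclidean space `ℝ^d`. -/
noncomputable def matVec {d : ℕ} (M : Matrix (Fin d) (Fin d) ℝ)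
    (x : EuclideanSpace ℝ (Fin d)) : EuclideanSpace ℝ (Fin d) :=
  Matrix.toEuclideanLin M x

/-- The spectral norm `‖M‖₂` of a matrix: the operator norm induced by the Euclidean norm. -/
noncomputable def matNorm2 {d : ℕ} (M : Matrix (Fin d) (Fin d) ℝ) : ℝ :=
  ‖LinearMap.toContinuousLinearMap (Matrix.toEuclideanLin M)‖

/-- The maximum absolute row-sum norm `‖A‖_∞` of a matrix. -/
noncomputable def rowSumNorm {s : ℕ} (A : Matrix (Fin s) (Fin s) ℝ) : ℝ :=
  ⨆ i, ∑ j, abs (A i j)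

/-- The continuous linear endomorphism of Euclidean space given by a matrix, as a linear function
of the matrix; its operator norm is by definition `matNorm2`. -/
noncomputable def matCLM {d : ℕ} : Matrix (Fin d) (Fin d) ℝ →ₗ[ℝ]
    (EuclideanSpace ℝ (Fin d) →L[ℝ] EuclideanSpace ℝ (Fin d)) :=
  LinearMap.toContinuousLinearMap.toLinearMap ∘ₗ Matrix.toEuclideanLin.toLinearMap

/-- A function continuous on `[0, h]` is bounded there by its (non-junk) supremum. -/
lemma le_iSup_Icc_of_continuousOn {h : ℝ} {f : ℝ → ℝ} (hf : ContinuousOn f (Set.Icc 0 h))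
    {r : ℝ} (hr : r ∈ Set.Icc (0:ℝ) h) : f r ≤ ⨆ t : Set.Icc (0:ℝ) h, f ↑t := by
  refine le_ciSup (f := fun t : Set.Icc (0:ℝ) h => f ↑t) ?_ ⟨r, hr⟩
  have hb := (isCompact_Icc.image_of_continuousOn hf).bddAbove
  rwa [Set.image_eq_range] at hb

/-- Pointwise estimate of the difference of the two integrands. -/
lemma norm_apply_sub_apply_le {E : Type*} [NormedAddCommGroup E] [NormedSpace ℝ E]
    (A B Q : E →L[ℝ] E) (x y : E) {L C M D : ℝ} (hL : 0 ≤ L)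
    (hAB : ‖A - B‖ ≤ L * ‖x - y‖) (hy : ‖y‖ ≤ C) (hA : ‖A‖ ≤ M) (hD : ‖x - y‖ ≤ D) :
    ‖A (Q x) - B (Q y)‖ ≤ ‖Q‖ * (L * C + M) * D := by
  have hD0 : 0 ≤ D := (norm_nonneg _).trans hD
  have hM0 : 0 ≤ M := (norm_nonneg _).trans hA
  have key : A (Q x) - B (Q y) = A (Q (x - y)) + (A - B) (Q y) := by
    simp [map_sub]
  have h1 : ‖A (Q (x - y))‖ ≤ M * (‖Q‖ * D) :=
    (A.le_opNorm _).trans (mul_le_mul hA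
      ((Q.le_opNorm _).trans (by gcongr)) (norm_nonneg _) hM0)
  have h2 : ‖(A - B) (Q y)‖ ≤ (L * D) * (‖Q‖ * C) :=
    ((A - B).le_opNorm _).trans (mul_le_mul (hAB.trans (by gcongr))
      ((Q.le_opNorm _).trans (by gcongr)) (norm_nonneg _) (by positivity))
  calc ‖A (Q x) - B (Q y)‖ ≤ M * (‖Q‖ * D) + (L * D) * (‖Q‖ * C) := by
        rw [key]; exact (norm_add_le _ _).trans (add_le_add h1 h2)
    _ = ‖Q‖ * (L * C + M) * D := by ring

/-- One explicit linearisation gains a factor of `h`: if `y` solves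
`y(t) = y(0) + ∫₀ᵗ S(y) Q y`, `u` solves `u(t) = y(0) + ∫₀ᵗ S(w) Q w`, and `‖w − y‖ ≤ D`
on `[0, h]`, then `‖u − y‖ ≤ h ‖Q‖₂ (L_S C_y + M) D` on `[0, h]`. -/
theorem explicit_linearisation_error_gain
    (d : ℕ) (hd : 0 < d)
    (Q : Matrix (Fin d) (Fin d) ℝ)
    (S : EuclideanSpace ℝ (Fin d) → Matrix (Fin d) (Fin d) ℝ)
    (LS : ℝ) (hLip : ∀ x y : EuclideanSpace ℝ (Fin d), matNorm2 (S x - S y) ≤ LS * ‖x - y‖)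
    (h : ℝ) (hh : 0 < h)
    (y w u : ℝ → EuclideanSpace ℝ (Fin d))
    (hyc : ContinuousOn y (Set.Icc 0 h)) (hwc : ContinuousOn w (Set.Icc 0 h))
    (huc : ContinuousOn u (Set.Icc 0 h))
    (hy : ∀ t ∈ Set.Icc (0:ℝ) h,
      y t = y 0 + ∫ r in (0:ℝ)..t, matVec (S (y r)) (matVec Q (y r)))
    (hu : ∀ t ∈ Set.Icc (0:ℝ) h,
      u t = y 0 + ∫ r in (0:ℝ)..t, matVec (S (w r)) (matVec Q (w r)))
    (D : ℝ) (hD : ∀ t ∈ Set.Icc (0:ℝ) h, ‖w t - y t‖ ≤ D) :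
    ∀ t ∈ Set.Icc (0:ℝ) h,
      ‖u t - y t‖ ≤
        h * matNorm2 Q *
          (LS * (⨆ t : Set.Icc (0:ℝ) h, ‖y ↑t‖) +
            (⨆ t : Set.Icc (0:ℝ) h, matNorm2 (S (w ↑t)))) * D := by
  -- Positive dimension provides two distinct points, which forces `LS` to be nonnegative.
  have hLS : 0 ≤ LS := by
    have h1 := hLip (EuclideanSpace.single ⟨0, hd⟩ 1) 0
    rw [sub_zero, PiLp.norm_single, norm_one, mul_one] at h1
    exact (norm_nonneg _).trans h1
  have hT : ∀ x z, ‖matCLM (S x) - matCLM (S z)‖ ≤ LS * ‖x - z‖ := fun x z => by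
    rw [← map_sub]; exact hLip x z
  have hTc : Continuous fun x => matCLM (S x) :=
    (LipschitzWith.of_dist_le_mul (K := ⟨LS, hLS⟩) fun x z => by
      rw [dist_eq_norm, dist_eq_norm]; exact hT x z).continuous
  have hint : ∀ v : ℝ → EuclideanSpace ℝ (Fin d), ContinuousOn v (Set.Icc 0 h) →
      ∀ t ∈ Set.Icc (0:ℝ) h,
        IntervalIntegrable (fun r => matVec (S (v r)) (matVec Q (v r))) volume 0 t := by
    intro v hv t ht
    have hv' : ContinuousOn v (Set.uIcc 0 t) := by
      rw [Set.uIcc_of_le ht.1]; exact hv.mono (Set.Icc_subset_Icc_right ht.2)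
    exact ((hTc.comp_continuousOn hv').clm_apply
      ((matCLM Q).continuous.comp_continuousOn hv')).intervalIntegrable
  have hbound : ∀ r ∈ Set.Icc (0:ℝ) h,
      ‖matVec (S (w r)) (matVec Q (w r)) - matVec (S (y r)) (matVec Q (y r))‖ ≤
        matNorm2 Q * (LS * (⨆ t : Set.Icc (0:ℝ) h, ‖y ↑t‖) +
          (⨆ t : Set.Icc (0:ℝ) h, matNorm2 (S (w ↑t)))) * D := fun r hr =>
    norm_apply_sub_apply_le (matCLM (S (w r))) (matCLM (S (y r))) (matCLM Q) (w r) (y r) hLS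
      (hT _ _) (le_iSup_Icc_of_continuousOn (f := fun t => ‖y t‖) hyc.norm hr)
      (le_iSup_Icc_of_continuousOn (f := fun t => matNorm2 (S (w t)))
        (hTc.comp_continuousOn hwc).norm hr) (hD r hr)
  intro t ht
  rw [hu t ht, hy t ht, add_sub_add_left_eq_sub,
    ← intervalIntegral.integral_sub (hint w hwc t ht) (hint y hyc t ht)]
  refine (intervalIntegral.norm_integral_le_of_norm_le_const fun r hr => hbound r ?_).trans ?_
  · rw [Set.uIoc_of_le ht.1] at hr
    exact ⟨hr.1.le, hr.2.trans ht.2⟩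
  · have hK := (norm_nonneg _).trans (hbound t ht)
    rw [sub_zero, abs_of_nonneg ht.1]
    refine (mul_le_mul_of_nonneg_left ht.2 hK).trans (le_of_eq ?_)
    ring
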